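/- Let 1 ≤ c ≤ 4/3. Every incentive compatible and individually rational direct mechanism on the triangle T = {(v1,v2) : v1 ≥ 0, v2 ≥ 0, v1/c + v2 ≤ 1} with the uniform distribution μ on T has revenue at most (2/3)*sqrt(c/3). -/

import Mathlib

open MeasureTheory Real

noncomputable section

/-- Utility of a buyer with value `v = (v₁, v₂)` for a menu item
`it = ((x₁, x₂), p)`, namely `v₁ * x₁ + v₂ * x₂ - p`. -/
def util (v : ℝ × ℝ) (it : (ℝ × ℝ) × ℝ) : ℝ :=
  v.1 * it.1.1 + v.2 * it.1.2 - it.2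

/-- `M` is a menu: every item has allocation in `[0,1]²` and nonnegative price,
and the zero item `((0,0),0)` belongs to `M`. -/
def IsMenu (M : Finset ((ℝ × ℝ) × ℝ)) : Prop :=
  (((0 : ℝ), (0 : ℝ)), (0 : ℝ)) ∈ M ∧
    ∀ it ∈ M, it.1.1 ∈ Set.Icc (0 : ℝ) 1 ∧ it.1.2 ∈ Set.Icc (0 : ℝ) 1 ∧ 0 ≤ it.2

/-- The price paid by a buyer with value `v`: the highest price among the
utility-maximizing menu items of `M`. -/
def buyerPrice (M : Finset ((ℝ × ℝ) × ℝ)) (v : ℝ × ℝ) : ℝ :=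
  sSup {p : ℝ | ∃ it ∈ M, it.2 = p ∧ ∀ it' ∈ M, util v it' ≤ util v it}

/-- Revenue of the menu `M` under the uniform distribution on `[0,1]²`. -/
def rev (M : Finset ((ℝ × ℝ) × ℝ)) : ℝ :=
  ∫ v in Set.Icc ((0 : ℝ), (0 : ℝ)) ((1 : ℝ), (1 : ℝ)), buyerPrice M v

/-- The triangle `T = {(v₁,v₂) : v₁ ≥ 0, v₂ ≥ 0, v₁/c + v₂ ≤ 1}`. -/
def Tri (c : ℝ) : Set (ℝ × ℝ) := {v | 0 ≤ v.1 ∧ 0 ≤ v.2 ∧ v.1 / c + v.2 ≤ 1}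

/-- The uniform probability measure on the triangle `Tri c`, i.e. the measure
with density `2 / c` with respect to Lebesgue measure, restricted to `Tri c`. -/
def triMeasure (c : ℝ) : Measure (ℝ × ℝ) :=
  ENNReal.ofReal (2 / c) • (volume.restrict (Tri c))

/-- Revenue of the menu `M` under the uniform distribution on the triangle `Tri c`. -/
def revTri (c : ℝ) (M : Finset ((ℝ × ℝ) × ℝ)) : ℝ :=
  ∫ v, buyerPrice M v ∂(triMeasure c)


lemma aux_slice (S : Set (ℝ × ℝ)) (hS : IsCompact S) (F : ℝ × ℝ → ℝ) (hF : Continuous F)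
    (a : ℝ) (ha : 0 ≤ a) (k : ℝ → ℝ) (hk : ∀ x ∈ Set.Icc 0 a, 0 ≤ k x)
    (h : ∀ x y, (x, y) ∈ S ↔ x ∈ Set.Icc 0 a ∧ y ∈ Set.Icc 0 (k x)) :
    ∫ v in S, F v = ∫ x in (0:ℝ)..a, ∫ y in (0:ℝ)..(k x), F (x, y) := by
  have hSm := hS.measurableSet
  have hint : Integrable (S.indicator F) (volume : Measure (ℝ × ℝ)) :=
    (integrable_indicator_iff hSm).2 (hF.continuousOn.integrableOn_compact hS)
  rw [← integral_indicator hSm]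
  rw [Measure.volume_eq_prod] at hint ⊢
  rw [integral_prod _ hint, intervalIntegral.integral_of_le ha, ← integral_Icc_eq_integral_Ioc,
    ← integral_indicator measurableSet_Icc]
  congr 1
  ext x
  by_cases hx : x ∈ Set.Icc 0 a
  · rw [Set.indicator_of_mem hx, intervalIntegral.integral_of_le (hk x hx),
      ← integral_Icc_eq_integral_Ioc, ← integral_indicator measurableSet_Icc]
    congr 1
    ext y
    by_cases hy : y ∈ Set.Icc 0 (k x)
    · rw [Set.indicator_of_mem hy, Set.indicator_of_mem ((h x y).2 ⟨hx, hy⟩)]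
    · rw [Set.indicator_of_notMem hy, Set.indicator_of_notMem (fun h' => hy ((h x y).1 h').2)]
  · rw [Set.indicator_of_notMem hx]
    have : ∀ y, S.indicator F (x, y) = 0 := fun y =>
      Set.indicator_of_notMem (fun h' => hx ((h x y).1 h').1) _
    simp [this]

lemma aux_slice' (S : Set (ℝ × ℝ)) (hS : IsCompact S) (F : ℝ × ℝ → ℝ) (hF : Continuous F)
    (a : ℝ) (ha : 0 ≤ a) (k : ℝ → ℝ) (hk : ∀ x ∈ Set.Icc 0 a, 0 ≤ k x)
    (h : ∀ x y, (x, y) ∈ S ↔ y ∈ Set.Icc 0 a ∧ x ∈ Set.Icc 0 (k y)) :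
    ∫ v in S, F v = ∫ y in (0:ℝ)..a, ∫ x in (0:ℝ)..(k y), F (x, y) := by
  have hSm := hS.measurableSet
  have hint : Integrable (S.indicator F) (volume : Measure (ℝ × ℝ)) :=
    (integrable_indicator_iff hSm).2 (hF.continuousOn.integrableOn_compact hS)
  rw [← integral_indicator hSm]
  rw [Measure.volume_eq_prod] at hint ⊢
  rw [integral_prod_symm _ hint, intervalIntegral.integral_of_le ha,
    ← integral_Icc_eq_integral_Ioc, ← integral_indicator measurableSet_Icc]
  congr 1
  ext y
  by_cases hy : y ∈ Set.Icc 0 a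
  · rw [Set.indicator_of_mem hy, intervalIntegral.integral_of_le (hk y hy),
      ← integral_Icc_eq_integral_Ioc, ← integral_indicator measurableSet_Icc]
    congr 1
    ext x
    by_cases hx : x ∈ Set.Icc 0 (k y)
    · rw [Set.indicator_of_mem hx, Set.indicator_of_mem ((h x y).2 ⟨hy, hx⟩)]
    · rw [Set.indicator_of_notMem hx, Set.indicator_of_notMem (fun h' => hx ((h x y).1 h').2)]
  · rw [Set.indicator_of_notMem hy]
    have : ∀ x, S.indicator F (x, y) = 0 := fun x =>
      Set.indicator_of_notMem (fun h' => hy ((h x y).1 h').1) _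
    simp [this]

lemma aux_1d (g : ℝ → ℝ) (hgc : Continuous g)
    (hg : ∀ x a, 0 ≤ a → g x ≤ g (x + a) ∧ g (x + a) ≤ g x + a)
    (L e : ℝ) (hL : 0 ≤ L) (he : 0 < e) :
    ∫ x in (0:ℝ)..L, x * ((g (x + e) - g x) / e) ≤ L * g L + L * e - ∫ x in (0:ℝ)..L, g x := by
  set P : ℝ → ℝ := fun x => ∫ y in (0:ℝ)..x, g y with hP
  have hPd : ∀ x, HasDerivAt P (g x) x := fun x =>
    intervalIntegral.integral_hasDerivAt_right (hgc.intervalIntegrable _ _)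
      hgc.aestronglyMeasurable.stronglyMeasurableAtFilter hgc.continuousAt
  have hPdiff : ∀ x, P (x + e) - P x = ∫ y in x..(x + e), g y := fun x =>
    intervalIntegral.integral_interval_sub_left (hgc.intervalIntegrable _ _)
      (hgc.intervalIntegrable _ _)
  have hPc : Continuous P := continuous_iff_continuousAt.2 fun x => (hPd x).continuousAt
  have hFd : ∀ x, HasDerivAt (fun x => (P (x + e) - P x) / e) ((g (x + e) - g x) / e) x := by
    intro x
    exact (((hPd (x + e)).comp_add_const x e).sub (hPd x)).div_const e
  have key := intervalIntegral.integral_mul_deriv_eq_deriv_mul (a := 0) (b := L)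
    (u := fun x => x) (u' := fun _ => (1:ℝ)) (fun x _ => hasDerivAt_id x) (fun x _ => hFd x)
    (continuous_const.intervalIntegrable _ _)
    ((by fun_prop : Continuous fun x => (g (x + e) - g x) / e).intervalIntegrable _ _)
  simp only [zero_mul, sub_zero, one_mul] at key
  rw [key]
  have hlow : ∀ x, g x ≤ (P (x + e) - P x) / e := by
    intro x
    rw [le_div_iff₀ he, hPdiff]
    have : ∫ y in x..(x + e), g x = g x * e := by simp; ring
    rw [← this]
    apply intervalIntegral.integral_mono_on (by linarith) (by simp)
      (hgc.intervalIntegrable _ _)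
    intro y hy
    have := (hg x (y - x) (by linarith [hy.1])).1
    simpa using this
  have hup : (P (L + e) - P L) / e ≤ g L + e := by
    rw [div_le_iff₀ he, hPdiff]
    have : ∫ y in L..(L + e), (g L + e) = (g L + e) * e := by simp; ring
    rw [← this]
    apply intervalIntegral.integral_mono_on (by linarith) (hgc.intervalIntegrable _ _) (by simp)
    intro y hy
    have := (hg L (y - L) (by linarith [hy.1])).2
    simp at this
    linarith [hy.2]
  have h2 : ∫ x in (0:ℝ)..L, g x ≤ ∫ x in (0:ℝ)..L, (P (x + e) - P x) / e :=
    intervalIntegral.integral_mono_on hL (hgc.intervalIntegrable _ _)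
      ((by fun_prop : Continuous fun x => (P (x + e) - P x) / e).intervalIntegrable _ _)
      (fun x _ => hlow x)
  have h3 := mul_le_mul_of_nonneg_left hup hL
  linarith

lemma tri_compact (c : ℝ) (hc : 0 < c) : IsCompact (Tri c) := by
  have hcl : IsClosed (Tri c) := by
    have : Tri c = {v | 0 ≤ v.1} ∩ ({v | 0 ≤ v.2} ∩ {v | v.1 / c + v.2 ≤ 1}) := by
      ext v; simp [Tri]
    rw [this]
    exact (isClosed_le (by fun_prop) (by fun_prop)).inter
      ((isClosed_le (by fun_prop) (by fun_prop)).inter (isClosed_le (by fun_prop) (by fun_prop)))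
  apply IsCompact.of_isClosed_subset (isCompact_Icc (a := ((0:ℝ), (0:ℝ))) (b := (c, (1:ℝ)))) hcl
  rintro ⟨x, y⟩ ⟨h1, h2, h3⟩
  simp only at h1 h2 h3
  have : 0 ≤ x / c := by positivity
  refine ⟨⟨h1, h2⟩, ⟨?_, by simp; linarith⟩⟩
  have : x / c ≤ 1 := by linarith
  simpa using (div_le_one hc).1 this

lemma tri_iff1 (c : ℝ) (hc : 0 < c) (x y : ℝ) :
    (x, y) ∈ Tri c ↔ x ∈ Set.Icc 0 c ∧ y ∈ Set.Icc 0 (1 - x / c) := by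
  simp only [Tri, Set.mem_ofPred_eq, Set.mem_Icc]
  constructor
  · rintro ⟨h1, h2, h3⟩
    have : x / c ≤ 1 := by linarith
    exact ⟨⟨h1, (div_le_one hc).1 this⟩, h2, by linarith⟩
  · rintro ⟨⟨h1, h2⟩, h3, h4⟩
    exact ⟨h1, h3, by linarith⟩

lemma tri_iff2 (c : ℝ) (hc : 0 < c) (x y : ℝ) :
    (x, y) ∈ Tri c ↔ y ∈ Set.Icc 0 1 ∧ x ∈ Set.Icc 0 (c * (1 - y)) := by
  simp only [Tri, Set.mem_ofPred_eq, Set.mem_Icc]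
  constructor
  · rintro ⟨h1, h2, h3⟩
    have h0 : 0 ≤ x / c := by positivity
    have : x / c ≤ 1 - y := by linarith
    rw [div_le_iff₀ hc] at this
    exact ⟨⟨h2, by linarith⟩, h1, by linarith⟩
  · rintro ⟨⟨h1, h2⟩, h3, h4⟩
    have : x / c ≤ 1 - y := by rw [div_le_iff₀ hc]; linarith
    exact ⟨h3, h1, by linarith⟩

lemma aux_parts (c : ℝ) (hc : 0 < c) (U : ℝ × ℝ → ℝ) (hUc : Continuous U)
    (hU1 : ∀ x y a, 0 ≤ a → U (x, y) ≤ U (x + a, y) ∧ U (x + a, y) ≤ U (x, y) + a)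
    (hU2 : ∀ x y a, 0 ≤ a → U (x, y) ≤ U (x, y + a) ∧ U (x, y + a) ≤ U (x, y) + a)
    (e : ℝ) (he : 0 < e) :
    ∫ v in Tri c, (v.1 * ((U (v.1 + e, v.2) - U (v.1, v.2)) / e) +
        v.2 * ((U (v.1, v.2 + e) - U (v.1, v.2)) / e) - U v) ≤
      c * (∫ y in (0:ℝ)..1, U (c * (1 - y), y)) + 2 * c * e - 3 * ∫ v in Tri c, U v := by
  have hT := tri_compact c hc
  have hk1 : ∀ x ∈ Set.Icc 0 c, 0 ≤ 1 - x / c := fun x hx => by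
    have := (div_le_one hc).2 hx.2; linarith
  have hk2 : ∀ y ∈ Set.Icc (0:ℝ) 1, 0 ≤ c * (1 - y) := fun y hy =>
    mul_nonneg hc.le (by linarith [hy.2])
  have c1 : Continuous fun v : ℝ × ℝ => v.1 * ((U (v.1 + e, v.2) - U (v.1, v.2)) / e) := by fun_prop
  have c2 : Continuous fun v : ℝ × ℝ => v.2 * ((U (v.1, v.2 + e) - U (v.1, v.2)) / e) := by fun_prop
  have i1 := c1.continuousOn.integrableOn_compact (μ := volume) hT
  have i2 := c2.continuousOn.integrableOn_compact (μ := volume) hT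
  have iU := hUc.continuousOn.integrableOn_compact (μ := volume) hT
  have i12 : IntegrableOn (fun v : ℝ × ℝ => v.1 * ((U (v.1 + e, v.2) - U (v.1, v.2)) / e) +
      v.2 * ((U (v.1, v.2 + e) - U (v.1, v.2)) / e)) (Tri c) := i1.add i2
  rw [integral_sub i12 iU, integral_add i1 i2]
  have eU1 := aux_slice (Tri c) hT U hUc c hc.le (fun x => 1 - x / c) hk1 (tri_iff1 c hc)
  have eU2 := aux_slice' (Tri c) hT U hUc 1 zero_le_one (fun y => c * (1 - y)) hk2 (tri_iff2 c hc)
  have e1 := aux_slice' (Tri c) hT _ c1 1 zero_le_one (fun y => c * (1 - y)) hk2 (tri_iff2 c hc)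
  have e2 := aux_slice (Tri c) hT _ c2 c hc.le (fun x => 1 - x / c) hk1 (tri_iff1 c hc)
  have pU1 : Continuous fun x : ℝ => ∫ y in (0:ℝ)..(1 - x / c), U (x, y) :=
    intervalIntegral.continuous_parametric_intervalIntegral_of_continuous
      (f := fun x y => U (x, y)) (by simpa [Function.uncurry_def] using hUc) (by fun_prop)
  have pU2 : Continuous fun y : ℝ => ∫ x in (0:ℝ)..(c * (1 - y)), U (x, y) :=
    intervalIntegral.continuous_parametric_intervalIntegral_of_continuous
      (f := fun y x => U (x, y)) (by simp only [Function.uncurry_def]; fun_prop) (by fun_prop)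
  have q1 : Continuous fun y : ℝ => ∫ x in (0:ℝ)..(c * (1 - y)),
      x * ((U (x + e, y) - U (x, y)) / e) :=
    intervalIntegral.continuous_parametric_intervalIntegral_of_continuous
      (f := fun y x => x * ((U (x + e, y) - U (x, y)) / e))
      (by simp only [Function.uncurry_def]; fun_prop) (by fun_prop)
  have q2 : Continuous fun x : ℝ => ∫ y in (0:ℝ)..(1 - x / c),
      y * ((U (x, y + e) - U (x, y)) / e) :=
    intervalIntegral.continuous_parametric_intervalIntegral_of_continuous
      (f := fun x y => y * ((U (x, y + e) - U (x, y)) / e))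
      (by simp only [Function.uncurry_def]; fun_prop) (by fun_prop)
  simp only at e1 e2
  have b1 : ∫ v in Tri c, v.1 * ((U (v.1 + e, v.2) - U (v.1, v.2)) / e) ≤
      c * (∫ y in (0:ℝ)..1, (1 - y) * U (c * (1 - y), y)) + c * e - ∫ v in Tri c, U v := by
    rw [e1, eU2]
    have s1 : Continuous fun y : ℝ => c * ((1 - y) * U (c * (1 - y), y)) := by fun_prop
    have s2 : Continuous fun y : ℝ => c * ((1 - y) * U (c * (1 - y), y)) + c * e := by fun_prop
    have : c * (∫ y in (0:ℝ)..1, (1 - y) * U (c * (1 - y), y)) + c * e -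
        (∫ y in (0:ℝ)..1, ∫ x in (0:ℝ)..(c * (1 - y)), U (x, y)) =
        ∫ y in (0:ℝ)..1, (c * ((1 - y) * U (c * (1 - y), y)) + c * e -
          ∫ x in (0:ℝ)..(c * (1 - y)), U (x, y)) := by
      rw [intervalIntegral.integral_sub (s2.intervalIntegrable _ _)
        (pU2.intervalIntegrable _ _), intervalIntegral.integral_add (s1.intervalIntegrable _ _)
        (by simp), intervalIntegral.integral_const_mul]
      simp
    rw [this]
    apply intervalIntegral.integral_mono_on zero_le_one (q1.intervalIntegrable _ _)
      ((s2.sub pU2).intervalIntegrable _ _)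
    intro y hy
    have := aux_1d (fun x => U (x, y)) (by fun_prop) (fun x a ha => hU1 x y a ha)
      (c * (1 - y)) e (hk2 y hy) he
    have h' : c * (1 - y) * e ≤ c * e := by
      have : 0 ≤ c * e * y := mul_nonneg (mul_nonneg hc.le he.le) hy.1
      nlinarith
    beta_reduce at this
    simp only [Pi.sub_apply]
    linarith
  have b2 : ∫ v in Tri c, v.2 * ((U (v.1, v.2 + e) - U (v.1, v.2)) / e) ≤
      c * (∫ y in (0:ℝ)..1, y * U (c * (1 - y), y)) + c * e - ∫ v in Tri c, U v := by
    rw [e2, eU1]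
    have s1 : Continuous fun x : ℝ => (1 - x / c) * U (x, 1 - x / c) := by fun_prop
    have s2 : Continuous fun x : ℝ => (1 - x / c) * U (x, 1 - x / c) + e := by fun_prop
    have sub : c * (∫ y in (0:ℝ)..1, y * U (c * (1 - y), y)) =
        ∫ x in (0:ℝ)..c, (1 - x / c) * U (x, 1 - x / c) := by
      have := intervalIntegral.integral_comp_sub_mul (a := 0) (b := 1)
        (fun x : ℝ => (1 - x / c) * U (x, 1 - x / c)) hc.ne' c
      simp only [mul_one, mul_zero, sub_self, sub_zero, smul_eq_mul] at this
      rw [eq_inv_mul_iff_mul_eq₀ hc.ne'] at this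
      rw [← this]
      congr 1
      apply intervalIntegral.integral_congr
      intro y _
      have h1 : 1 - (c - c * y) / c = y := by field_simp; ring
      have h2 : c * (1 - y) = c - c * y := by ring
      simp only [h1, h2]
    rw [sub]
    have : (∫ x in (0:ℝ)..c, (1 - x / c) * U (x, 1 - x / c)) + c * e -
        (∫ x in (0:ℝ)..c, ∫ y in (0:ℝ)..(1 - x / c), U (x, y)) =
        ∫ x in (0:ℝ)..c, ((1 - x / c) * U (x, 1 - x / c) + e -
          ∫ y in (0:ℝ)..(1 - x / c), U (x, y)) := by
      rw [intervalIntegral.integral_sub (s2.intervalIntegrable _ _)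
        (pU1.intervalIntegrable _ _), intervalIntegral.integral_add (s1.intervalIntegrable _ _)
        (by simp)]
      simp
    rw [this]
    apply intervalIntegral.integral_mono_on hc.le (q2.intervalIntegrable _ _)
      ((s2.sub pU1).intervalIntegrable _ _)
    intro x hx
    have := aux_1d (fun y => U (x, y)) (by fun_prop) (fun y a ha => hU2 x y a ha)
      (1 - x / c) e (hk1 x hx) he
    have h' : (1 - x / c) * e ≤ e := by
      have : 0 ≤ x / c := div_nonneg hx.1 hc.le
      nlinarith
    beta_reduce at this
    simp only [Pi.sub_apply]
    linarith
  have hsum : (∫ y in (0:ℝ)..1, U (c * (1 - y), y)) =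
      (∫ y in (0:ℝ)..1, (1 - y) * U (c * (1 - y), y)) +
      ∫ y in (0:ℝ)..1, y * U (c * (1 - y), y) := by
    rw [← intervalIntegral.integral_add
      ((by fun_prop : Continuous fun y : ℝ => (1 - y) * U (c * (1 - y), y)).intervalIntegrable _ _)
      ((by fun_prop : Continuous fun y : ℝ => y * U (c * (1 - y), y)).intervalIntegrable _ _)]
    congr 1; ext y; ring
  rw [hsum]
  linarith


def fF (c t x : ℝ) : ℝ :=
  (max (2 * c - 3 * x) 0 + Real.sqrt ((max (2 * c - 3 * x) 0) ^ 2 - 9 * c * (max (t - x) 0) ^ 2))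
    / (3 * c)

lemma fF_cont (c t : ℝ) : Continuous (fF c t) := by
  unfold fF; fun_prop

lemma t_bounds (c t : ℝ) (hc1 : 1 ≤ c) (hc2 : c ≤ 4 / 3) (ht : 0 < t) (htc : 3 * t ^ 2 = c) :
    1 / 2 < t ∧ t ≤ 2 / 3 ∧ t < 2 * c / 3 ∧ c / 3 ≤ t := by
  have h1 : 1 / 2 < t := by nlinarith
  have h2 : t ≤ 2 / 3 := by nlinarith
  refine ⟨h1, h2, by nlinarith, by nlinarith⟩

lemma fF_disc (c t x : ℝ) (hc1 : 1 ≤ c) (hc2 : c ≤ 4 / 3) (ht : 0 < t) (htc : 3 * t ^ 2 = c)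
    (hx : 0 ≤ x) :
    0 ≤ (max (2 * c - 3 * x) 0) ^ 2 - 9 * c * (max (t - x) 0) ^ 2 := by
  obtain ⟨h1, h2, h3, h4⟩ := t_bounds c t hc1 hc2 ht htc
  rcases le_total x t with hxt | hxt
  · rw [max_eq_left (by linarith), max_eq_left (by linarith)]
    have e : 9 * c * (t - x) ^ 2 = 3 * (3 * t * (t - x)) ^ 2 := by rw [← htc]; ring
    rw [e]
    have hq : 0 ≤ 3 * t * (t - x) := by have := sub_nonneg.2 hxt; positivity
    have : 7 / 4 * (3 * t * (t - x)) ≤ 2 * c - 3 * x := by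
      nlinarith
    nlinarith
  · rw [max_eq_right (a := t - x) (by linarith)]
    simp only [ne_eq, OfNat.ofNat_ne_zero, not_false_eq_true, zero_pow, mul_zero, sub_zero]
    positivity

lemma fF_zero (c t : ℝ) (hc1 : 1 ≤ c) (ht : 0 < t) (htc : 3 * t ^ 2 = c) :
    fF c t 0 = 1 := by
  unfold fF
  rw [max_eq_left (by linarith), max_eq_left (by linarith)]
  have : (2 * c - 3 * 0) ^ 2 - 9 * c * (t - 0) ^ 2 = c ^ 2 := by rw [← htc]; ring
  rw [this, Real.sqrt_sq (by linarith)]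
  field_simp; ring

lemma fF_end (c t x : ℝ) (hc1 : 1 ≤ c) (hx : 2 * c / 3 ≤ x) : fF c t x = 0 := by
  unfold fF
  have hneg : (max (2 * c - 3 * x) 0) = 0 := max_eq_right (by linarith)
  rw [hneg, Real.sqrt_eq_zero_of_nonpos]
  · simp
  · have : 0 ≤ 9 * c * (max (t - x) 0) ^ 2 := by positivity
    linarith

lemma fF_nonneg (c t x : ℝ) (hc1 : 1 ≤ c) : 0 ≤ fF c t x := by
  unfold fF; positivity

lemma fF_anti (c t : ℝ) (hc1 : 1 ≤ c) (hc2 : c ≤ 4 / 3) (ht : 0 < t) (htc : 3 * t ^ 2 = c)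
    (x y : ℝ) (hx : 0 ≤ x) (hxy : x < y) (hy : y ≤ 2 * c / 3) : fF c t y < fF c t x := by
  obtain ⟨h1, h2, h3, h4⟩ := t_bounds c t hc1 hc2 ht htc
  unfold fF
  apply div_lt_div_of_pos_right _ (by linarith)
  rw [max_eq_left (a := 2 * c - 3 * y) (by linarith), max_eq_left (a := 2 * c - 3 * x) (by linarith)]
  apply add_lt_add_of_lt_of_le (by linarith)
  apply Real.sqrt_le_sqrt
  have A : ∀ a b : ℝ, 0 ≤ a → a ≤ b → b ≤ t →
      (2 * c - 3 * b) ^ 2 - 9 * c * (t - b) ^ 2 ≤ (2 * c - 3 * a) ^ 2 - 9 * c * (t - a) ^ 2 := by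
    intro a b ha hab hb
    have e : (2 * c - 3 * a) ^ 2 - 9 * c * (t - a) ^ 2 - ((2 * c - 3 * b) ^ 2 - 9 * c * (t - b) ^ 2)
      = (b - a) * (6 * c * (2 - 3 * t) + 9 * (c - 1) * (a + b)) := by ring
    have : 0 ≤ (b - a) * (6 * c * (2 - 3 * t) + 9 * (c - 1) * (a + b)) := by
      apply mul_nonneg (by linarith)
      have := mul_nonneg (by linarith : 0 ≤ 6 * c) (by linarith : 0 ≤ 2 - 3 * t)
      have := mul_nonneg (by linarith : 0 ≤ 9 * (c - 1)) (by linarith : 0 ≤ a + b)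
      linarith
    linarith
  have B : ∀ a b : ℝ, a ≤ b → b ≤ 2 * c / 3 → (2 * c - 3 * b) ^ 2 ≤ (2 * c - 3 * a) ^ 2 := by
    intro a b hab hb
    nlinarith
  rcases le_total y t with hyt | hyt
  · rw [max_eq_left (a := t - y) (by linarith), max_eq_left (a := t - x) (by linarith)]
    exact A x y hx hxy.le hyt
  · rw [max_eq_right (a := t - y) (by linarith)]
    rcases le_total x t with hxt | hxt
    · rw [max_eq_left (a := t - x) (by linarith)]
      have := A x t hx hxt le_rfl
      have := B t y hyt hy
      nlinarith
    · rw [max_eq_right (a := t - x) (by linarith)]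
      have := B x y hxy.le hy
      linarith

lemma fF_le (c t : ℝ) (hc1 : 1 ≤ c) (hc2 : c ≤ 4 / 3) (ht : 0 < t) (htc : 3 * t ^ 2 = c)
    (x : ℝ) (hx : 0 ≤ x) (hxc : x ≤ c) : fF c t x ≤ 1 - x / c := by
  obtain ⟨h1, h2, h3, h4⟩ := t_bounds c t hc1 hc2 ht htc
  rcases le_total x (2 * c / 3) with hx2 | hx2
  · unfold fF
    rw [div_le_iff₀ (by linarith)]
    have e : (1 - x / c) * (3 * c) = 3 * c - 3 * x := by field_simp
    rw [e, max_eq_left (a := 2 * c - 3 * x) (by linarith)]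
    have : Real.sqrt ((2 * c - 3 * x) ^ 2 - 9 * c * max (t - x) 0 ^ 2) ≤ c := by
      rw [Real.sqrt_le_left (by linarith)]
      rcases le_total x t with hxt | hxt
      · rw [max_eq_left (a := t - x) (by linarith)]
        have e : (2 * c - 3 * x) ^ 2 - 9 * c * (t - x) ^ 2 =
          c ^ 2 - (6 * c * x * (2 - 3 * t) + 9 * (c - 1) * x ^ 2) + 3 * c * (c - 3 * t ^ 2) := by ring
        rw [e, htc]
        have := mul_nonneg (by positivity : 0 ≤ 6 * c * x) (by linarith : 0 ≤ 2 - 3 * t)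
        have := mul_nonneg (by linarith : 0 ≤ 9 * (c - 1)) (sq_nonneg x)
        linarith
      · rw [max_eq_right (a := t - x) (by linarith)]
        nlinarith
    linarith
  · rw [fF_end c t x hc1 hx2]
    have := (div_le_one (by linarith : 0 < c)).2 hxc
    linarith

lemma fF_root (c t : ℝ) (hc1 : 1 ≤ c) (hc2 : c ≤ 4 / 3) (ht : 0 < t) (htc : 3 * t ^ 2 = c)
    (x : ℝ) (hx : 0 ≤ x) (hxc : x ≤ 2 * c / 3) (y : ℝ) (h : fF c t x = y) :
    y * (3 * x - 2 * c + 3 * c * y / 2) + 3 / 2 * (max (t - x) 0) ^ 2 = 0 ∧ t - x ≤ y := by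
  obtain ⟨h1, h2, h3, h4⟩ := t_bounds c t hc1 hc2 ht htc
  have hd := fF_disc c t x hc1 hc2 ht htc hx
  unfold fF at h
  rw [max_eq_left (a := 2 * c - 3 * x) (by linarith)] at h hd
  rw [div_eq_iff (by linarith)] at h
  have hs := Real.sq_sqrt hd
  have hs0 := Real.sqrt_nonneg ((2 * c - 3 * x) ^ 2 - 9 * c * max (t - x) 0 ^ 2)
  have hs' : Real.sqrt ((2 * c - 3 * x) ^ 2 - 9 * c * max (t - x) 0 ^ 2)
    = y * (3 * c) - (2 * c - 3 * x) := by linarith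
  rw [hs'] at hs hs0
  constructor
  · have : (6 * c) * (y * (3 * x - 2 * c + 3 * c * y / 2) + 3 / 2 * (max (t - x) 0) ^ 2) = 0 := by
      linarith
    rcases mul_eq_zero.1 this with h | h
    · linarith
    · exact h
  · have : 3 * c * (t - x) ≤ 3 * c * y := by
      nlinarith
    exact le_of_mul_le_mul_left this (by linarith)


def NN (c t : ℝ) : Set (ℝ × ℝ) := {v | v ∈ Tri c ∧ t ≤ v.1 + v.2}

lemma NN_compact (c t : ℝ) (hc : 0 < c) : IsCompact (NN c t) := by
  have : NN c t = Tri c ∩ {v | t ≤ v.1 + v.2} := by ext v; simp [NN]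
  rw [this]
  exact (tri_compact c hc).inter_right (isClosed_le (by fun_prop) (by fun_prop))

lemma int_max (G t y : ℝ) (hty : t - G ≤ y) (hy : 0 ≤ y) :
    ∫ z in (0:ℝ)..y, max G (t - z) = G * y + (max (t - G) 0) ^ 2 / 2 := by
  rcases le_total t G with h | h
  · rw [max_eq_right (by linarith)]
    have : ∫ z in (0:ℝ)..y, max G (t - z) = ∫ z in (0:ℝ)..y, G := by
      apply intervalIntegral.integral_congr
      intro z hz
      rw [Set.uIcc_of_le hy] at hz
      exact max_eq_left (by linarith [hz.1])
    rw [this]; simp; ring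
  · rw [max_eq_left (a := t - G) (by linarith)]
    have hc : Continuous fun z : ℝ => max G (t - z) := by fun_prop
    rw [← intervalIntegral.integral_add_adjacent_intervals (b := t - G)
      (hc.intervalIntegrable _ _) (hc.intervalIntegrable _ _)]
    have e1 : ∫ z in (0:ℝ)..(t - G), max G (t - z) = ∫ z in (0:ℝ)..(t - G), (t - z) := by
      apply intervalIntegral.integral_congr
      intro z hz
      rw [Set.uIcc_of_le (by linarith)] at hz
      exact max_eq_right (by linarith [hz.2])
    have e2 : ∫ z in (t - G)..y, max G (t - z) = ∫ z in (t - G)..y, G := by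
      apply intervalIntegral.integral_congr
      intro z hz
      rw [Set.uIcc_of_le (by linarith)] at hz
      exact max_eq_left (by linarith [hz.1])
    rw [e1, e2, intervalIntegral.integral_sub (by simp) (by simp)]
    simp
    ring

lemma area (c t G y : ℝ) (hc1 : 1 ≤ c) (ht1 : t ≤ 1) (hG : 0 ≤ G) (hy : 0 ≤ y) (hy1 : y ≤ 1)
    (hGy : G ≤ c * (1 - y)) (hty : t - G ≤ y)
    (hroot : y * (3 * G - 2 * c + 3 * c * y / 2) + 3 / 2 * (max (t - G) 0) ^ 2 = 0) :
    volume {v : ℝ × ℝ | v ∈ NN c t ∧ v.2 ≤ y ∧ G ≤ v.1} = ENNReal.ofReal (c / 3 * y) := by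
  have hc : 0 < c := by linarith
  have hm : MeasurableSet {v : ℝ × ℝ | v ∈ NN c t ∧ v.2 ≤ y ∧ G ≤ v.1} := by
    have : {v : ℝ × ℝ | v ∈ NN c t ∧ v.2 ≤ y ∧ G ≤ v.1} =
      NN c t ∩ ({v | v.2 ≤ y} ∩ {v | G ≤ v.1}) := by
      ext v; simp only [Set.mem_inter_iff, Set.mem_ofPred_eq]
    rw [this]
    exact (NN_compact c t hc).measurableSet.inter
      ((measurableSet_le (by fun_prop) (by fun_prop)).inter
        (measurableSet_le (by fun_prop) (by fun_prop)))
  have hcont : Continuous fun z : ℝ => c * (1 - z) - max G (t - z) := by fun_prop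
  rw [Measure.volume_eq_prod, Measure.prod_apply_symm hm]
  have hs : ∀ z : ℝ, volume ((fun x : ℝ => (x, z)) ⁻¹' {v : ℝ × ℝ | v ∈ NN c t ∧ v.2 ≤ y ∧ G ≤ v.1})
      = (Set.Icc 0 y).indicator (fun z => ENNReal.ofReal (c * (1 - z) - max G (t - z))) z := by
    intro z
    by_cases hz : z ∈ Set.Icc 0 y
    · rw [Set.indicator_of_mem hz, ← Real.volume_Icc]
      congr 1
      ext x
      have := tri_iff2 c hc x z
      simp only [Set.mem_preimage, Set.mem_ofPred_eq, NN, this, Set.mem_Icc, max_le_iff]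
      constructor
      · rintro ⟨⟨⟨_, _, h1⟩, h2⟩, h3, h4⟩
        exact ⟨⟨h4, by linarith⟩, h1⟩
      · rintro ⟨⟨h1, h2⟩, h3⟩
        exact ⟨⟨⟨⟨hz.1, by linarith [hz.2]⟩, by linarith, h3⟩, by linarith⟩, hz.2, h1⟩
    · rw [Set.indicator_of_notMem hz]
      convert measure_empty (μ := (volume : Measure ℝ))
      ext x
      simp only [Set.mem_preimage, Set.mem_ofPred_eq, NN, Set.mem_empty_iff_false, iff_false]
      rintro ⟨⟨⟨_, h1, _⟩, _⟩, h2, _⟩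
      exact hz ⟨h1, h2⟩
  simp_rw [hs]
  rw [lintegral_indicator measurableSet_Icc, ← ofReal_integral_eq_lintegral_ofReal
    (hcont.continuousOn.integrableOn_compact isCompact_Icc)]
  · rw [integral_Icc_eq_integral_Ioc, ← intervalIntegral.integral_of_le hy,
      intervalIntegral.integral_sub
      ((by fun_prop : Continuous fun z : ℝ => c * (1 - z)).intervalIntegrable _ _)
      ((by fun_prop : Continuous fun z : ℝ => max G (t - z)).intervalIntegrable _ _),
      int_max G t y hty hy, intervalIntegral.integral_const_mul,
      intervalIntegral.integral_sub (by simp) (by simp)]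
    congr 1
    simp
    linarith
  · rw [Filter.EventuallyLE, ae_restrict_iff' measurableSet_Icc]
    refine Filter.Eventually.of_forall fun z hz => ?_
    simp only [Pi.zero_apply, sub_nonneg, max_le_iff]
    have h1 : z ≤ 1 := hz.2.trans hy1
    constructor
    · have := mul_le_mul_of_nonneg_left hz.2 hc.le
      linarith
    · have := mul_nonneg (by linarith : 0 ≤ c - 1) (by linarith : 0 ≤ 1 - z)
      linarith

def YY (c t : ℝ) (v : ℝ × ℝ) : ℝ := max v.2 (fF c t v.1)

lemma YY_cont (c t : ℝ) : Continuous (YY c t) := by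
  have := fF_cont c t
  unfold YY; fun_prop

lemma YY_le (c t : ℝ) (hc1 : 1 ≤ c) (hc2 : c ≤ 4 / 3) (ht : 0 < t) (htc : 3 * t ^ 2 = c)
    (v : ℝ × ℝ) (hv : v ∈ Tri c) : 0 ≤ YY c t v ∧ v.2 ≤ YY c t v ∧ v.1 ≤ c * (1 - YY c t v) := by
  have hc : 0 < c := by linarith
  obtain ⟨x, y⟩ := v
  have h1 := (tri_iff1 c hc x y).1 hv
  refine ⟨le_max_of_le_left h1.2.1, le_max_left _ _, ?_⟩
  have : YY c t (x, y) ≤ 1 - x / c := by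
    apply max_le h1.2.2
    exact fF_le c t hc1 hc2 ht htc x h1.1.1 h1.1.2
  have h3 : x / c ≤ 1 - YY c t (x, y) := by linarith
  rw [div_le_iff₀ hc] at h3
  simp only; linarith

lemma YY_map (c t : ℝ) (hc1 : 1 ≤ c) (hc2 : c ≤ 4 / 3) (ht : 0 < t) (htc : 3 * t ^ 2 = c) :
    Measure.map (YY c t) (volume.restrict (NN c t)) =
      ENNReal.ofReal (c / 3) • (volume.restrict (Set.Icc (0:ℝ) 1)) := by
  have hc : 0 < c := by linarith
  obtain ⟨h1, h2, h3, h4⟩ := t_bounds c t hc1 hc2 ht htc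
  have hN := NN_compact c t hc
  have : IsFiniteMeasure (volume.restrict (NN c t)) := ⟨by
    simpa using hN.measure_lt_top⟩
  apply Measure.ext_of_Iic
  intro b
  have hYm := (YY_cont c t).measurable
  rw [Measure.map_apply hYm measurableSet_Iic, Measure.restrict_apply (hYm measurableSet_Iic),
    Measure.smul_apply, Measure.restrict_apply measurableSet_Iic]
  rcases lt_or_ge b 0 with hb | hb
  · have e1 : YY c t ⁻¹' Set.Iic b ∩ NN c t = ∅ := by
      ext v
      simp only [Set.mem_inter_iff, Set.mem_preimage, Set.mem_Iic, Set.mem_empty_iff_false,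
        iff_false, not_and]
      intro h hv
      linarith [(YY_le c t hc1 hc2 ht htc v hv.1).1]
    have e2 : Set.Iic b ∩ Set.Icc (0:ℝ) 1 = ∅ := by
      ext z
      simp only [Set.mem_inter_iff, Set.mem_Iic, Set.mem_Icc, Set.mem_empty_iff_false, iff_false]
      rintro ⟨h, h', _⟩
      linarith
    rw [e1, e2]; simp
  · have hy0 : 0 ≤ min b 1 := le_min hb zero_le_one
    have hy1 : min b 1 ≤ 1 := min_le_right _ _
    have e2 : Set.Iic b ∩ Set.Icc (0:ℝ) 1 = Set.Icc 0 (min b 1) := by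
      ext z
      simp only [Set.mem_inter_iff, Set.mem_Iic, Set.mem_Icc, le_min_iff]
      tauto
    obtain ⟨G, hGm, hG⟩ : min b 1 ∈ fF c t '' Set.Icc 0 (2 * c / 3) := by
      apply intermediate_value_Icc' (by linarith) (fF_cont c t).continuousOn
      rw [fF_zero c t hc1 ht htc, fF_end c t _ hc1 le_rfl]
      exact ⟨hy0, hy1⟩
    have hroot := fF_root c t hc1 hc2 ht htc G hGm.1 hGm.2 _ hG
    have hle := fF_le c t hc1 hc2 ht htc G hGm.1 (by linarith [hGm.2])
    have hGy : G ≤ c * (1 - min b 1) := by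
      have : G / c ≤ 1 - min b 1 := by linarith
      rw [div_le_iff₀ hc] at this
      linarith
    have e1 : YY c t ⁻¹' Set.Iic b ∩ NN c t = {v | v ∈ NN c t ∧ v.2 ≤ min b 1 ∧ G ≤ v.1} := by
      ext ⟨x, y⟩
      simp only [Set.mem_inter_iff, Set.mem_preimage, Set.mem_Iic, Set.mem_ofPred_eq]
      rw [and_comm]
      apply and_congr_right
      intro hv
      have hx := ((tri_iff1 c hc x y).1 hv.1).1
      have hyy := ((tri_iff2 c hc x y).1 hv.1).1
      have hf1 : fF c t x ≤ 1 := by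
        have := fF_le c t hc1 hc2 ht htc x hx.1 hx.2
        have : 0 ≤ x / c := div_nonneg hx.1 hc.le
        linarith
      have k1 : YY c t (x, y) ≤ b ↔ y ≤ min b 1 ∧ fF c t x ≤ min b 1 := by
        simp only [YY, max_le_iff, le_min_iff, hyy.2, hf1, and_true]
      rw [k1]
      apply and_congr_right
      intro _
      constructor
      · intro hf
        by_contra hlt
        push Not at hlt
        have := fF_anti c t hc1 hc2 ht htc x G hx.1 hlt hGm.2
        linarith
      · intro hGx
        rcases hGx.eq_or_lt with h | h
        · rw [← h, hG]
        · rcases le_total x (2 * c / 3) with h' | h'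
          · have := fF_anti c t hc1 hc2 ht htc G x hGm.1 h h'
            linarith
          · rw [fF_end c t x hc1 h']; exact hy0
    rw [e1, e2, area c t G _ hc1 (by linarith) hGm.1 hy0 hy1 hGy hroot.2 hroot.1, Real.volume_Icc,
      smul_eq_mul, sub_zero, ENNReal.ofReal_mul (by positivity)]

lemma int_lin (c t : ℝ) (hc1 : 1 ≤ c) (ht : 0 < t) (ht1 : t ≤ 1) :
    c * (c + 1) / 6 - t ^ 3 / 3 ≤ ∫ v in NN c t, (v.1 + v.2) := by
  have hc : 0 < c := by linarith
  set F : ℝ × ℝ → ℝ := fun v => v.1 + v.2 with hF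
  have hFc : Continuous F := by fun_prop
  set Z : Set (ℝ × ℝ) := {v | 0 ≤ v.1 ∧ 0 ≤ v.2 ∧ v.1 + v.2 ≤ t} with hZ
  have hT := tri_compact c hc
  have hN := NN_compact c t hc
  have hZT : Z ⊆ Tri c := by
    rintro ⟨x, y⟩ ⟨h1, h2, h3⟩
    simp only at h1 h2 h3
    have : x / c ≤ x := div_le_self h1 hc1
    exact ⟨h1, h2, by simp only; linarith⟩
  have hZcl : IsClosed Z := by
    have : Z = {v | 0 ≤ v.1} ∩ ({v | 0 ≤ v.2} ∩ {v | v.1 + v.2 ≤ t}) := by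
      ext v; simp [hZ]
    rw [this]
    exact (isClosed_le (by fun_prop) (by fun_prop)).inter
      ((isClosed_le (by fun_prop) (by fun_prop)).inter (isClosed_le (by fun_prop) (by fun_prop)))
  have hZc : IsCompact Z := hT.of_isClosed_subset hZcl hZT
  have iT := hFc.continuousOn.integrableOn_compact (μ := volume) hT
  have iN := hFc.continuousOn.integrableOn_compact (μ := volume) hN
  have h1 : ∫ v in Tri c \ Z, F v ≤ ∫ v in NN c t, F v := by
    apply setIntegral_mono_set iN
    · rw [Filter.EventuallyLE, ae_restrict_iff' hN.measurableSet]
      refine Filter.Eventually.of_forall fun v hv => ?_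
      exact add_nonneg hv.1.1 hv.1.2.1
    · apply Filter.Eventually.of_forall
      rintro v ⟨hv, hvz⟩
      refine ⟨hv, ?_⟩
      by_contra hlt
      push Not at hlt
      exact hvz ⟨hv.1, hv.2.1, hlt.le⟩
  rw [setIntegral_sdiff hZc.measurableSet iT hZT] at h1
  have inner : ∀ x k : ℝ, ∫ y in (0:ℝ)..k, (x + y) = x * k + k ^ 2 / 2 := by
    intro x k
    rw [intervalIntegral.integral_add (by simp) (by simp)]
    simp; ring
  have eT : ∫ v in Tri c, F v = c * (c + 1) / 6 := by
    rw [aux_slice (Tri c) hT F hFc c hc.le (fun x => 1 - x / c) (fun x hx => by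
      have := (div_le_one hc).2 hx.2; linarith) (tri_iff1 c hc)]
    simp only [hF, inner]
    have : ∀ x : ℝ, x * (1 - x / c) + (1 - x / c) ^ 2 / 2 =
      1 / 2 + (1 - 1 / c) * x + (1 / (2 * c ^ 2) - 1 / c) * x ^ 2 := by
      intro x; field_simp; ring
    simp_rw [this]
    rw [intervalIntegral.integral_add ((by fun_prop : Continuous _).intervalIntegrable _ _)
      ((by fun_prop : Continuous _).intervalIntegrable _ _),
      intervalIntegral.integral_add ((by fun_prop : Continuous _).intervalIntegrable _ _)
      ((by fun_prop : Continuous _).intervalIntegrable _ _),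
      intervalIntegral.integral_const_mul, intervalIntegral.integral_const_mul]
    simp
    field_simp
    ring
  have eZ : ∫ v in Z, F v = t ^ 3 / 3 := by
    rw [aux_slice Z hZc F hFc t ht.le (fun x => t - x) (fun x hx => by linarith [hx.2]) (by
      intro x y
      simp only [hZ, Set.mem_ofPred_eq, Set.mem_Icc]
      constructor
      · rintro ⟨h1, h2, h3⟩
        exact ⟨⟨h1, by linarith⟩, h2, by linarith⟩
      · rintro ⟨⟨h1, h2⟩, h3, h4⟩
        exact ⟨h1, h3, by linarith⟩)]
    simp only [hF, inner]
    have : ∀ x : ℝ, x * (t - x) + (t - x) ^ 2 / 2 = t ^ 2 / 2 - 1 / 2 * x ^ 2 := by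
      intro x; ring
    simp_rw [this]
    rw [intervalIntegral.integral_sub (by simp)
      ((by fun_prop : Continuous _).intervalIntegrable _ _),
      intervalIntegral.integral_const_mul]
    simp
    ring
  linarith

lemma transport (c t : ℝ) (hc1 : 1 ≤ c) (hc2 : c ≤ 4 / 3) (ht : 0 < t) (htc : 3 * t ^ 2 = c)
    (U : ℝ × ℝ → ℝ) (hUc : Continuous U)
    (hU : ∀ v w : ℝ × ℝ, U v ≤ U w + max (v.1 - w.1) 0 + max (v.2 - w.2) 0)
    (hU0 : ∀ v ∈ Tri c, 0 ≤ U v) :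
    c * (∫ y in (0:ℝ)..1, U (c * (1 - y), y)) - 3 * ∫ v in Tri c, U v ≤ t ^ 3 := by
  have hc : 0 < c := by linarith
  obtain ⟨h1, h2, h3, h4⟩ := t_bounds c t hc1 hc2 ht htc
  have hT := tri_compact c hc
  have hN := NN_compact c t hc
  have hYc := YY_cont c t
  have push : ∀ H : ℝ → ℝ, Continuous H →
      ∫ v in NN c t, H (YY c t v) = c / 3 * ∫ y in (0:ℝ)..1, H y := by
    intro H hH
    rw [← integral_map (f := H) hYc.measurable.aemeasurable hH.aestronglyMeasurable,
      YY_map c t hc1 hc2 ht htc, integral_smul_measure, ENNReal.toReal_ofReal (by positivity),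
      integral_Icc_eq_integral_Ioc, ← intervalIntegral.integral_of_le zero_le_one, smul_eq_mul]
  have p1 := push (fun y => U (c * (1 - y), y)) (by fun_prop)
  have p2 := push (fun y => c * (1 - y) + y) (by fun_prop)
  have p3 : ∫ y in (0:ℝ)..1, (c * (1 - y) + y) = (c + 1) / 2 := by
    rw [intervalIntegral.integral_add ((by fun_prop : Continuous _).intervalIntegrable _ _)
      (by simp), intervalIntegral.integral_const_mul,
      intervalIntegral.integral_sub (by simp) (by simp)]
    simp; ring
  rw [p3] at p2
  have iT := hUc.continuousOn.integrableOn_compact (μ := volume) hT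
  have iN := hUc.continuousOn.integrableOn_compact (μ := volume) hN
  have hNT : ∫ v in NN c t, U v ≤ ∫ v in Tri c, U v := by
    apply setIntegral_mono_set iT
    · rw [Filter.EventuallyLE, ae_restrict_iff' hT.measurableSet]
      exact Filter.Eventually.of_forall fun v hv => hU0 v hv
    · exact Filter.Eventually.of_forall fun v hv => hv.1
  have j1 : IntegrableOn (fun v => U (c * (1 - YY c t v), YY c t v)) (NN c t) :=
    (by fun_prop : Continuous _).continuousOn.integrableOn_compact hN
  have j2 : IntegrableOn (fun v => c * (1 - YY c t v) + YY c t v) (NN c t) :=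
    (by fun_prop : Continuous _).continuousOn.integrableOn_compact hN
  have j3 : IntegrableOn (fun v : ℝ × ℝ => v.1 + v.2) (NN c t) :=
    (by fun_prop : Continuous _).continuousOn.integrableOn_compact hN
  have hle : ∫ v in NN c t, (U (c * (1 - YY c t v), YY c t v) + (v.1 + v.2)) ≤
      ∫ v in NN c t, (U v + (c * (1 - YY c t v) + YY c t v)) := by
    apply setIntegral_mono_on (j1.add j3) (iN.add j2) hN.measurableSet
    intro v hv
    have hy := YY_le c t hc1 hc2 ht htc v hv.1
    have := hU (c * (1 - YY c t v), YY c t v) v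
    simp only at this
    rw [max_eq_left (by linarith [hy.2.2]), max_eq_left (by linarith [hy.2.1])] at this
    simp only [Pi.add_apply]
    linarith
  rw [integral_add j1 j3, integral_add iN j2, p1, p2] at hle
  have := int_lin c t hc1 ht (by linarith)
  nlinarith

/-- for `1 ≤ c ≤ 4/3`, every IC and IR direct mechanism on the
triangle `Tri c` with the uniform distribution has revenue at most
`(2/3) * √(c/3)`. -/
theorem triangle_revenue_le_small_c (c : ℝ) (hc1 : 1 ≤ c) (hc2 : c ≤ 4 / 3)
    (x : ℝ × ℝ → ℝ × ℝ) (p : ℝ × ℝ → ℝ)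
    (hx : ∀ v ∈ Tri c, (x v).1 ∈ Set.Icc (0 : ℝ) 1 ∧ (x v).2 ∈ Set.Icc (0 : ℝ) 1)
    (hIC : ∀ v ∈ Tri c, ∀ v' ∈ Tri c,
      v.1 * (x v').1 + v.2 * (x v').2 - p v' ≤ v.1 * (x v).1 + v.2 * (x v).2 - p v)
    (hIR : ∀ v ∈ Tri c, 0 ≤ v.1 * (x v).1 + v.2 * (x v).2 - p v) :
    ∫ v, p v ∂(triMeasure c) ≤ (2 / 3) * Real.sqrt (c / 3) := by
  have hc : 0 < c := by linarith
  set t := Real.sqrt (c / 3) with htdef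
  have ht : 0 < t := Real.sqrt_pos.2 (by positivity)
  have htc : 3 * t ^ 2 = c := by
    rw [htdef, Real.sq_sqrt (by positivity)]; ring
  have hT := tri_compact c hc
  have h0T : ((0:ℝ), (0:ℝ)) ∈ Tri c := by simp [Tri]
  rw [triMeasure, integral_smul_measure, ENNReal.toReal_ofReal (by positivity), smul_eq_mul]
  suffices hmain : ∫ v in Tri c, p v ≤ t ^ 3 by
    have h1 := mul_le_mul_of_nonneg_left hmain (by positivity : 0 ≤ 2 / c)
    have h2 : 2 / c * t ^ 3 = 2 / 3 * t := by
      rw [← htc]; field_simp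
    linarith
  by_cases hint : IntegrableOn p (Tri c)
  swap
  · rw [integral_undef hint]; positivity
  let fam : ℝ × ℝ → Tri c → ℝ := fun v w => v.1 * (x w).1 + v.2 * (x w).2 - p w
  let U : ℝ × ℝ → ℝ := fun v => ⨆ w : Tri c, fam v w
  have hne : Nonempty (Tri c) := ⟨⟨_, h0T⟩⟩
  have hbdd : ∀ v, BddAbove (Set.range (fam v)) := by
    intro v
    refine ⟨|v.1| + |v.2| - p (0, 0), ?_⟩
    rintro _ ⟨⟨w, hw⟩, rfl⟩
    have h1 := hIC _ h0T w hw
    simp only [zero_mul, add_zero, zero_sub] at h1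
    obtain ⟨⟨a1, a2⟩, ⟨b1, b2⟩⟩ := hx w hw
    have h2 : v.1 * (x w).1 ≤ |v.1| := by
      have := mul_le_mul_of_nonneg_right (le_abs_self v.1) a1
      have := mul_le_mul_of_nonneg_left a2 (abs_nonneg v.1)
      linarith
    have h3 : v.2 * (x w).2 ≤ |v.2| := by
      have := mul_le_mul_of_nonneg_right (le_abs_self v.2) b1
      have := mul_le_mul_of_nonneg_left b2 (abs_nonneg v.2)
      linarith
    simp only [fam]
    linarith
  have hge : ∀ v, ∀ w (hw : w ∈ Tri c), v.1 * (x w).1 + v.2 * (x w).2 - p w ≤ U v :=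
    fun v w hw => le_ciSup (hbdd v) ⟨w, hw⟩
  have hUeq : ∀ v ∈ Tri c, U v = v.1 * (x v).1 + v.2 * (x v).2 - p v := by
    intro v hv
    apply le_antisymm _ (hge v v hv)
    exact ciSup_le fun w => hIC v hv w.1 w.2
  have hU : ∀ v w : ℝ × ℝ, U v ≤ U w + max (v.1 - w.1) 0 + max (v.2 - w.2) 0 := by
    intro v w
    apply ciSup_le
    rintro ⟨z, hz⟩
    have h1 := hge w z hz
    obtain ⟨⟨a1, a2⟩, ⟨b1, b2⟩⟩ := hx z hz
    have k : ∀ d a : ℝ, 0 ≤ a → a ≤ 1 → d * a ≤ max d 0 := by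
      intro d a h0 h1
      have := mul_le_mul_of_nonneg_right (le_max_left d 0) h0
      have := mul_le_mul_of_nonneg_left h1 (le_max_right d 0)
      linarith
    have h2 := k (v.1 - w.1) _ a1 a2
    have h3 := k (v.2 - w.2) _ b1 b2
    simp only [fam]
    linarith
  have hU0 : ∀ v ∈ Tri c, 0 ≤ U v := fun v hv => by rw [hUeq v hv]; exact hIR v hv
  have hUc : Continuous U := by
    rw [continuous_iff_continuousAt]
    intro w
    have hl : Filter.Tendsto (fun v : ℝ × ℝ => U w - (max (w.1 - v.1) 0 + max (w.2 - v.2) 0))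
        (nhds w) (nhds (U w)) := by
      have : Continuous (fun v : ℝ × ℝ => U w - (max (w.1 - v.1) 0 + max (w.2 - v.2) 0)) := by
        fun_prop
      simpa using this.tendsto w
    have hr : Filter.Tendsto (fun v : ℝ × ℝ => U w + max (v.1 - w.1) 0 + max (v.2 - w.2) 0)
        (nhds w) (nhds (U w)) := by
      have : Continuous (fun v : ℝ × ℝ => U w + max (v.1 - w.1) 0 + max (v.2 - w.2) 0) := by
        fun_prop
      simpa using this.tendsto w
    refine tendsto_of_tendsto_of_tendsto_of_le_of_le hl hr ?_ ?_
    · intro v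
      have := hU w v
      simp only
      linarith
    · intro v
      exact hU v w
  have hU1 : ∀ x y a, 0 ≤ a → U (x, y) ≤ U (x + a, y) ∧ U (x + a, y) ≤ U (x, y) + a := by
    intro x y a ha
    have h1 := hU (x, y) (x + a, y)
    have h2 := hU (x + a, y) (x, y)
    simp [ha] at h1 h2
    exact ⟨h1, h2⟩
  have hU2 : ∀ x y a, 0 ≤ a → U (x, y) ≤ U (x, y + a) ∧ U (x, y + a) ≤ U (x, y) + a := by
    intro x y a ha
    have h1 := hU (x, y) (x, y + a)
    have h2 := hU (x, y + a) (x, y)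
    simp [ha] at h1 h2
    exact ⟨h1, h2⟩
  have htr := transport c t hc1 hc2 ht htc U hUc hU hU0
  apply le_of_forall_pos_le_add
  intro d hd
  have he : 0 < d / (2 * c) := by positivity
  have hparts := aux_parts c hc U hUc hU1 hU2 (d / (2 * c)) he
  have hde : 2 * c * (d / (2 * c)) = d := by field_simp
  rw [hde] at hparts
  generalize d / (2 * c) = e at he hparts
  have hmono : ∫ v in Tri c, p v ≤
      ∫ v in Tri c, (v.1 * ((U (v.1 + e, v.2) - U (v.1, v.2)) / e) +
        v.2 * ((U (v.1, v.2 + e) - U (v.1, v.2)) / e) - U v) := by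
    apply setIntegral_mono_on hint
      ((by fun_prop : Continuous _).continuousOn.integrableOn_compact hT) hT.measurableSet
    intro v hv
    have g1 := hge (v.1 + e, v.2) v hv
    have g2 := hge (v.1, v.2 + e) v hv
    have e0 := hUeq v hv
    simp only at g1 g2
    have k1 : (x v).1 ≤ (U (v.1 + e, v.2) - U (v.1, v.2)) / e := by
      rw [le_div_iff₀ he, Prod.mk.eta]; linarith
    have k2 : (x v).2 ≤ (U (v.1, v.2 + e) - U (v.1, v.2)) / e := by
      rw [le_div_iff₀ he, Prod.mk.eta]; linarith
    have m1 := mul_le_mul_of_nonneg_left k1 hv.1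
    have m2 := mul_le_mul_of_nonneg_left k2 hv.2.1
    linarith
  linarith
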